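/- arXiv:2410.10170 — 2 statements merged into one kernel-verified Lean document; each statement's English description precedes it below -/
import Mathlib

section
/- Every connected graph G satisfying γ_t(G) = i_0(G) + 1 has a dominating vertex, i.e., a vertex adjacent to every other vertex of G. -/
variable {V : Type*} [Fintype V] [DecidableEq V]

/-- `S` is a total dominating set of `G`: every vertex of `G` has a neighbor in `S`. -/
def IsTotalDomSet (G : SimpleGraph V) (S : Finset V) : Prop :=
  ∀ v : V, ∃ u ∈ S, G.Adj u v

/-- The total domination number: minimum cardinality of a total dominating set. -/
noncomputable def totalDomNum (G : SimpleGraph V) : ℕ :=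
  sInf {n | ∃ S : Finset V, IsTotalDomSet G S ∧ S.card = n}

/-- `S` is an isolate set of `G`: some vertex of `S` has no neighbor in `S`. -/
def IsIsolateSet (G : SimpleGraph V) (S : Finset V) : Prop :=
  ∃ v ∈ S, ∀ u ∈ S, ¬ G.Adj v u

/-- `S` is a maximal isolate set of `G`. -/
def IsMaximalIsolateSet (G : SimpleGraph V) (S : Finset V) : Prop :=
  IsIsolateSet G S ∧ ∀ T : Finset V, S ⊂ T → ¬ IsIsolateSet G T

/-- The isolate number: minimum cardinality of a maximal isolate set. -/
noncomputable def isolateNum (G : SimpleGraph V) : ℕ :=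
  sInf {n | ∃ S : Finset V, IsMaximalIsolateSet G S ∧ S.card = n}

/-!
Let `S` be a maximal isolate set with isolated vertex `v`. Then `v` is adjacent to every vertex
outside `S`, and `S ∪ {u}` is a total dominating set for every `u ∉ S`. If `v` is not dominating,
connectedness yields an edge from some `b ∈ S`, `b ≠ v`, to some `u ∉ S`. Suppose `γ_t(G) > |S|`.
Then `S ∪ {u}` is a minimum total dominating set, so each of its vertices has a private neighbor.
A private neighbor of `w ∈ S \ {v}` is not adjacent to `u`, and not to `v` either, so it lies in
`S \ {v, b}`. But distinct vertices have distinct private neighbors, so `|S \ {v}|` of them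
cannot fit there.
-/

section

omit [Fintype V] [DecidableEq V]

variable {G : SimpleGraph V} {S T D : Finset V} {u v w w' y : V}

/-- `y` is a private neighbor of `w` with respect to `D`, i.e. `N(y) ∩ D = {w}`. Private neighbors
witness that no vertex can be removed from a minimal total dominating set; here `y` may itself
belong to `D`. -/
def IsPrivateNeighbor (G : SimpleGraph V) (D : Finset V) (w y : V) : Prop :=
  ∀ x, (x ∈ D ∧ G.Adj x y) ↔ x = w

theorem IsPrivateNeighbor.eq (hw : IsPrivateNeighbor G D w y) (hw' : IsPrivateNeighbor G D w' y) :
    w = w' :=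
  (hw' w).1 ((hw w).2 rfl)

theorem IsPrivateNeighbor.not_adj (hw : IsPrivateNeighbor G D w y) (hu : u ∈ D) (huw : u ≠ w) :
    ¬ G.Adj u y :=
  fun h => huw ((hw u).1 ⟨hu, h⟩)

theorem totalDomNum_le_card (hD : IsTotalDomSet G D) : totalDomNum G ≤ D.card :=
  Nat.sInf_le ⟨D, hD, rfl⟩

theorem IsTotalDomSet.minimal_of_card_le (hD : IsTotalDomSet G D) (h : D.card ≤ totalDomNum G) :
    Minimal (IsTotalDomSet G) D :=
  ⟨hD, fun _ hT hTD =>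
    (Finset.eq_of_subset_of_card_le hTD (h.trans (totalDomNum_le_card hT))).ge⟩

theorem exists_isPrivateNeighbor_of_minimal (hD : Minimal (IsTotalDomSet G) D) (hw : w ∈ D) :
    ∃ y, IsPrivateNeighbor G D w y := by
  classical
  have herase : ¬ IsTotalDomSet G (D.erase w) := hD.not_prop_of_lt (Finset.erase_ssubset hw)
  obtain ⟨y, hy⟩ : ∃ y, ∀ x ∈ D.erase w, ¬ G.Adj x y := by
    simpa only [IsTotalDomSet, not_forall, not_exists, not_and] using herase
  have honly : ∀ x ∈ D, G.Adj x y → x = w := fun x hx hxy =>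
    by_contra fun hxw => hy x (Finset.mem_erase.2 ⟨hxw, hx⟩) hxy
  obtain ⟨x, hx, hxy⟩ := hD.prop y
  obtain rfl := honly x hx hxy
  exact ⟨y, fun z => ⟨fun hz => honly z hz.1 hz.2, by rintro rfl; exact ⟨hx, hxy⟩⟩⟩

theorem exists_isMaximalIsolateSet [Finite V] [Nonempty V] (G : SimpleGraph V) :
    ∃ S, IsMaximalIsolateSet G S := by
  obtain ⟨v⟩ := ‹Nonempty V›
  have hv : IsIsolateSet G {v} := ⟨v, by simp⟩
  obtain ⟨S, -, hS⟩ := (Set.toFinite {S | IsIsolateSet G S}).exists_le_maximal hv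
  exact ⟨S, hS.prop, fun _ => hS.not_prop_of_gt⟩

theorem exists_isMaximalIsolateSet_card_eq (h : ∃ S, IsMaximalIsolateSet G S) :
    ∃ S, IsMaximalIsolateSet G S ∧ S.card = isolateNum G := by
  obtain ⟨S, hS⟩ := h
  exact Nat.sInf_mem (s := {n | ∃ S, IsMaximalIsolateSet G S ∧ S.card = n}) ⟨S.card, S, hS, rfl⟩

theorem IsMaximalIsolateSet.exists_adj_of_ssubset (hS : IsMaximalIsolateSet G S) (hST : S ⊂ T)
    (hw : w ∈ T) : ∃ x ∈ T, G.Adj w x := by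
  by_contra! h
  exact hS.2 T hST ⟨w, hw, h⟩

theorem IsMaximalIsolateSet.adj_of_notMem (hS : IsMaximalIsolateSet G S) (hvS : v ∈ S)
    (hv : ∀ x ∈ S, ¬ G.Adj v x) (hu : u ∉ S) : G.Adj v u := by
  classical
  obtain ⟨x, hx, hvx⟩ :=
    hS.exists_adj_of_ssubset (Finset.ssubset_insert hu) (Finset.mem_insert_of_mem hvS)
  obtain rfl | hxS := Finset.mem_insert.1 hx
  · exact hvx
  · exact absurd hvx (hv x hxS)

theorem IsMaximalIsolateSet.isTotalDomSet_of_ssubset (hS : IsMaximalIsolateSet G S)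
    (hST : S ⊂ T) : IsTotalDomSet G T := by
  intro y
  by_cases hy : y ∈ T
  · obtain ⟨x, hx, hyx⟩ := hS.exists_adj_of_ssubset hST hy
    exact ⟨x, hx, hyx.symm⟩
  · obtain ⟨v, hvS, hv⟩ := hS.1
    exact ⟨v, hST.subset hvS, hS.adj_of_notMem hvS hv fun h => hy (hST.subset h)⟩

theorem exists_adj_notMem_of_preconnected {a : V} (hG : G.Preconnected)
    (hv : ∀ x ∈ S, ¬ G.Adj v x) (ha : a ∈ S) (hav : a ≠ v) :
    ∃ b ∈ S, b ≠ v ∧ ∃ u ∉ S, G.Adj b u := by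
  obtain ⟨p⟩ := hG a v
  obtain ⟨d, -, ⟨hbS, hbv⟩, hd⟩ :=
    p.exists_boundary_dart {x | x ∈ S ∧ x ≠ v} ⟨ha, hav⟩ fun h => h.2 rfl
  have hne : d.snd ≠ v := fun h => hv d.fst hbS (h ▸ d.adj.symm)
  exact ⟨d.fst, hbS, hbv, d.snd, fun h => hd ⟨h, hne⟩, d.adj⟩

theorem not_minimal_isTotalDomSet_insert [DecidableEq V] {b : V} (hvS : v ∈ S)
    (hv : ∀ x ∉ S, G.Adj v x) (hbS : b ∈ S) (hbv : b ≠ v) (hu : u ∉ S) (hbu : G.Adj b u) :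
    ¬ Minimal (IsTotalDomSet G) (insert u S) := by
  intro hD
  have hprivate : ∀ w ∈ S.erase v, ∃ y ∈ (S.erase v).erase b,
      IsPrivateNeighbor G (insert u S) w y := by
    intro w hw
    obtain ⟨hwv, hwS⟩ := Finset.mem_erase.1 hw
    obtain ⟨y, hy⟩ := exists_isPrivateNeighbor_of_minimal hD (Finset.mem_insert_of_mem hwS)
    have huy : ¬ G.Adj u y :=
      hy.not_adj (Finset.mem_insert_self u S) (ne_of_mem_of_not_mem hwS hu).symm
    have hvy : ¬ G.Adj v y := hy.not_adj (Finset.mem_insert_of_mem hvS) hwv.symm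
    have hyb : y ≠ b := by rintro rfl; exact huy hbu.symm
    have hyv : y ≠ v := by rintro rfl; exact huy (hv u hu).symm
    have hyS : y ∈ S := by_contra fun h => hvy (hv y h)
    exact ⟨y, Finset.mem_erase.2 ⟨hyb, Finset.mem_erase.2 ⟨hyv, hyS⟩⟩, hy⟩
  choose! p hpS hp using hprivate
  have hinj : Set.InjOn p (S.erase v) := fun w hw w' hw' h =>
    (hp w hw).eq (h ▸ hp w' hw')
  have hcard : (S.erase v).card ≤ ((S.erase v).erase b).card :=
    Finset.card_le_card_of_injOn p hpS hinj
  exact hcard.not_gt (Finset.card_erase_lt_of_mem (Finset.mem_erase.2 ⟨hbv, hbS⟩))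

theorem exists_dominating_vertex_general (hG : G.Preconnected)
    (hS : ∃ S, IsMaximalIsolateSet G S) (h : isolateNum G < totalDomNum G) :
    ∃ v : V, ∀ u : V, u ≠ v → G.Adj v u := by
  classical
  by_contra! hno
  obtain ⟨S, hS, hcard⟩ := exists_isMaximalIsolateSet_card_eq hS
  obtain ⟨v, hvS, hv⟩ := hS.1
  have hout : ∀ x ∉ S, G.Adj v x := fun _ => hS.adj_of_notMem hvS hv
  obtain ⟨a, hav, hva⟩ := hno v
  have haS : a ∈ S := by_contra fun ha => hva (hout a ha)
  obtain ⟨b, hbS, hbv, u, hu, hbu⟩ := exists_adj_notMem_of_preconnected hG hv haS hav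
  have hD : IsTotalDomSet G (insert u S) :=
    hS.isTotalDomSet_of_ssubset (Finset.ssubset_insert hu)
  have hDcard : (insert u S).card ≤ totalDomNum G := by
    rwa [Finset.card_insert_of_notMem hu, hcard]
  exact not_minimal_isTotalDomSet_insert hvS hout hbS hbv hu hbu (hD.minimal_of_card_le hDcard)

end

/-- Every connected graph `G` with `γ_t(G) = i_0(G) + 1` has a dominating vertex,
i.e. a vertex adjacent to every other vertex. -/
theorem exists_dominating_vertex (G : SimpleGraph V) (hc : G.Connected)
    (h : totalDomNum G = isolateNum G + 1) :
    ∃ v : V, ∀ u : V, u ≠ v → G.Adj v u := by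
  have := hc.nonempty
  exact exists_dominating_vertex_general hc.preconnected (exists_isMaximalIsolateSet G) h.ge
end

section
/- A connected graph G with at least two vertices satisfies γ_t(G) = i_0(G) + 1 if and only if G contains a dominating vertex, i.e., a vertex adjacent to every other vertex of G. -/
variable {V : Type*} [Fintype V] [DecidableEq V]

/-!
A maximal isolate set is the complement of the neighborhood of a vertex `v` that is isolated in it.
If `v` is universal then this set is `{v}`, so `i_0 = 1`, while `γ_t = 2`. Otherwise let `r ≠ v` be
a vertex of the set that shares a neighbor `u` with `v`. Taking `v`, together with one neighbor of
each member of the set other than `v`, where `u` is the one taken for `r`, gives a total dominating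
set: `v` dominates everything outside the isolate set and `u` dominates `v`. Hence `γ_t ≤ i_0` when
no vertex is universal.
-/

section

variable {α : Type*} {G : SimpleGraph α} {S : Finset α} {v : α}

theorem IsTotalDomSet.one_lt_card [Nonempty α] (hS : IsTotalDomSet G S) : 1 < S.card := by
  obtain ⟨v⟩ := ‹Nonempty α›
  obtain ⟨a, ha, -⟩ := hS v
  obtain ⟨b, hb, hba⟩ := hS a
  exact Finset.one_lt_card.2 ⟨b, hb, a, ha, hba.ne⟩

theorem IsTotalDomSet.totalDomNum_le (hS : IsTotalDomSet G S) : totalDomNum G ≤ S.card :=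
  Nat.sInf_le ⟨S, hS, rfl⟩

theorem totalDomNum_ne_one (G : SimpleGraph α) : totalDomNum G ≠ 1 := by
  intro h
  obtain ⟨S, hS, hcard⟩ := Nat.sInf_mem (Nat.nonempty_of_sInf_eq_succ h)
  rw [← totalDomNum, h] at hcard
  obtain ⟨v, -⟩ := Finset.card_eq_one.1 hcard
  have : Nonempty α := ⟨v⟩
  exact hS.one_lt_card.ne' hcard

theorem exists_isMaximalIsolateSet_card_eq_isolateNum (h : isolateNum G ≠ 0) :
    ∃ S, IsMaximalIsolateSet G S ∧ S.card = isolateNum G :=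
  Nat.sInf_mem (Nat.nonempty_of_pos_sInf (Nat.pos_of_ne_zero h))

theorem totalDomNum_eq_two_of_isUniversal [Nontrivial α] (hv : G.IsUniversal v) :
    totalDomNum G = 2 := by
  classical
  obtain ⟨u, huv⟩ := exists_ne v
  have hpair : IsTotalDomSet G {v, u} := by
    intro w
    obtain rfl | hvw := eq_or_ne v w
    · exact ⟨u, by simp, (hv huv.symm).symm⟩
    · exact ⟨v, by simp, hv hvw⟩
  apply le_antisymm
  · exact hpair.totalDomNum_le.trans Finset.card_le_two
  · refine le_csInf ⟨_, _, hpair, rfl⟩ ?_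
    rintro _ ⟨S, hS, rfl⟩
    exact hS.one_lt_card

theorem isMaximalIsolateSet_singleton_of_isUniversal (hv : G.IsUniversal v) :
    IsMaximalIsolateSet G {v} := by
  refine ⟨⟨v, by simp, by simp⟩, ?_⟩
  rintro T hT ⟨x, hxT, hx⟩
  have hvT : v ∈ T := Finset.singleton_subset_iff.1 hT.subset
  obtain rfl | hvx := eq_or_ne v x
  · obtain ⟨y, hyT, hyv⟩ := Finset.exists_of_ssubset hT
    exact hx y hyT (hv (Finset.notMem_singleton.1 hyv).symm)
  · exact hx v hvT (hv hvx).symm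

theorem isolateNum_eq_one_of_isUniversal (hv : G.IsUniversal v) : isolateNum G = 1 := by
  have hmax := isMaximalIsolateSet_singleton_of_isUniversal hv
  apply le_antisymm
  · exact Nat.sInf_le ⟨{v}, hmax, Finset.card_singleton v⟩
  · refine le_csInf ⟨_, _, hmax, rfl⟩ ?_
    rintro _ ⟨S, ⟨⟨x, hx, -⟩, -⟩, rfl⟩
    exact Finset.card_pos.2 ⟨x, hx⟩

theorem IsMaximalIsolateSet.exists_coe_eq_compl_neighborSet (hS : IsMaximalIsolateSet G S) :
    ∃ v, (S : Set α) = (G.neighborSet v)ᶜ := by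
  classical
  obtain ⟨⟨v, hvS, hv⟩, hmax⟩ := hS
  refine ⟨v, Set.Subset.antisymm hv fun w hvw => ?_⟩
  by_contra hwS
  refine hmax (insert w S) (Finset.ssubset_insert hwS) ⟨v, Finset.mem_insert_of_mem hvS, ?_⟩
  exact (Finset.forall_mem_insert _ _ _).2 ⟨hvw, hv⟩

theorem exists_adj_adj_not_adj_of_not_isUniversal (hG : G.Preconnected)
    (hv : ¬ G.IsUniversal v) : ∃ u r, G.Adj v u ∧ G.Adj u r ∧ ¬ G.Adj v r ∧ r ≠ v := by
  obtain ⟨w, hvw, hnadj⟩ : ∃ w, v ≠ w ∧ ¬ G.Adj v w := by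
    simpa [SimpleGraph.IsUniversal] using hv
  obtain ⟨p⟩ := hG w v
  obtain ⟨⟨⟨r, u⟩, hru⟩, -, ⟨hvr, hrv⟩, hu⟩ :=
    p.exists_boundary_dart {x | ¬ G.Adj v x ∧ x ≠ v} ⟨hnadj, hvw.symm⟩ (fun h => h.2 rfl)
  have huv : u ≠ v := by
    rintro rfl
    exact hvr hru.symm
  have hvu : G.Adj v u := by
    by_contra h
    exact hu ⟨h, huv⟩
  exact ⟨u, r, hvu, hru.symm, hvr, hrv⟩

theorem exists_isTotalDomSet_card_le_of_coe_eq_compl_neighborSet (hG : G.Preconnected)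
    (hS : (S : Set α) = (G.neighborSet v)ᶜ) (hv : ¬ G.IsUniversal v) :
    ∃ T, IsTotalDomSet G T ∧ T.card ≤ S.card := by
  classical
  have mem_S (w : α) : w ∈ S ↔ ¬ G.Adj v w := Set.ext_iff.1 hS w
  obtain ⟨u, r, hvu, hur, hvr, hrv⟩ := exists_adj_adj_not_adj_of_not_isUniversal hG hv
  have : Nontrivial α := ⟨r, v, hrv⟩
  obtain ⟨f, hf, hfr⟩ : ∃ f : α → α, (∀ w, G.Adj (f w) w) ∧ f r = u := by
    choose g hg using hG.exists_adj_of_nontrivial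
    refine ⟨Function.update g r u, fun w => ?_, Function.update_self ..⟩
    obtain rfl | hwr := eq_or_ne w r
    · rwa [Function.update_self]
    · rw [Function.update_of_ne hwr]
      exact (hg w).symm
  have f_mem {w : α} (hvw : ¬ G.Adj v w) (hwv : w ≠ v) :
      f w ∈ insert v ((S.erase v).image f) :=
    Finset.mem_insert_of_mem <| Finset.mem_image_of_mem f <|
      Finset.mem_erase.2 ⟨hwv, (mem_S w).2 hvw⟩
  refine ⟨insert v ((S.erase v).image f), fun w => ?_, ?_⟩
  · by_cases hvw : G.Adj v w
    · exact ⟨v, Finset.mem_insert_self .., hvw⟩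
    obtain rfl | hwv := eq_or_ne w v
    · exact ⟨f r, f_mem hvr hrv, hfr ▸ hvu.symm⟩
    · exact ⟨f w, f_mem hvw hwv, hf w⟩
  · calc (insert v ((S.erase v).image f)).card
        ≤ ((S.erase v).image f).card + 1 := Finset.card_insert_le ..
      _ ≤ (S.erase v).card + 1 := Nat.add_le_add_right Finset.card_image_le 1
      _ = S.card := Finset.card_erase_add_one ((mem_S v).2 G.irrefl)

-- On an infinite graph, `isolateNum` and `totalDomNum` take the value `sInf ∅ = 0` when no finite
-- set qualifies.
theorem totalDomNum_le_isolateNum (hG : G.Preconnected) (huniv : ∀ v, ¬ G.IsUniversal v)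
    (hpos : isolateNum G ≠ 0) : totalDomNum G ≤ isolateNum G := by
  obtain ⟨S, hS, hcard⟩ := exists_isMaximalIsolateSet_card_eq_isolateNum hpos
  obtain ⟨v, hSv⟩ := hS.exists_coe_eq_compl_neighborSet
  obtain ⟨T, hT, hTS⟩ :=
    exists_isTotalDomSet_card_le_of_coe_eq_compl_neighborSet hG hSv (huniv v)
  exact hcard ▸ hT.totalDomNum_le.trans hTS

theorem totalDomNum_eq_isolateNum_add_one_iff_general [Nontrivial α] (hG : G.Preconnected) :
    totalDomNum G = isolateNum G + 1 ↔ ∃ v, G.IsUniversal v := by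
  constructor
  · intro h
    have hpos : isolateNum G ≠ 0 := fun h0 => totalDomNum_ne_one G (by rw [h, h0])
    by_contra! huniv
    have hle := totalDomNum_le_isolateNum hG huniv hpos
    omega
  · rintro ⟨v, hv⟩
    rw [totalDomNum_eq_two_of_isUniversal hv, isolateNum_eq_one_of_isUniversal hv]

end

/-- A connected graph `G` with at least two vertices satisfies `γ_t(G) = i_0(G) + 1`
if and only if `G` has a dominating vertex. -/
theorem totalDomNum_eq_isolateNum_add_one_iff (G : SimpleGraph V) (hc : G.Connected)
    (hn : 1 < Fintype.card V) :
    totalDomNum G = isolateNum G + 1 ↔ ∃ v : V, ∀ u : V, u ≠ v → G.Adj v u := by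
  have := Fintype.one_lt_card_iff_nontrivial.1 hn
  simpa only [SimpleGraph.IsUniversal, ne_comm] using
    totalDomNum_eq_isolateNum_add_one_iff_general hc.preconnected
end
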